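/- arXiv:1404.3240 — 2 statements merged into one kernel-verified Lean document; each statement's English description precedes it below -/
import Mathlib

section
/- Let A = [[x, y],[z, w]] be a 2×2 matrix with strictly positive entries x, y, z, w > 0. Then τ₊(A) = 2 − xw/(yz) if xw ≤ yz, and τ₊(A) = 2 − yz/(xw) if xw ≥ yz; equivalently, τ₊(A) = 2 − min(xw/(yz), yz/(xw)). -/
open Matrix

/-- The set of atoms `𝒜₊(A)`: rank-at-most-one matrices `R` with `0 ≤ R ≤ A` entrywise. -/
noncomputable def Aplus {m n : Type*} [Fintype m] [Fintype n]
    (A : Matrix m n ℝ) : Set (Matrix m n ℝ) :=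
  {R | R.rank ≤ 1 ∧ ∀ i j, 0 ≤ R i j ∧ R i j ≤ A i j}

/-- `τ₊(A)`: supremum of `L(A)` over linear functionals `L` with `L ≤ 1` on `𝒜₊(A)`. -/
noncomputable def tauPlus {m n : Type*} [Fintype m] [Fintype n]
    (A : Matrix m n ℝ) : ℝ :=
  sSup {x | ∃ L : Matrix m n ℝ →ₗ[ℝ] ℝ, (∀ R ∈ Aplus A, L R ≤ 1) ∧ L A = x}

/-!
Suppose `A = !![x, y; z, w]` with `x * w ≤ y * z`, and put `s = x * w / (y * z)`. The functional
`R ↦ R₀₁ / y + R₁₀ / z - (w / (y * z)) * R₀₀` is at most `1` on `𝒜₊(A)`: since `R₁₁ ≤ w` and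
`det R = 0`, its last term is at most `-(R₀₁ / y) * (R₁₀ / z)`, and `u + v - u * v ≤ 1` for
`u, v ≤ 1`. It takes the value `2 - s` at `A`. Conversely, lowering the entry `z` of `A` to `s * z`
makes the determinant vanish, so `A` is an atom plus `1 - s` times the atom supported on `z`,
whence `L A ≤ 1 + (1 - s)` for every feasible `L`. Swapping the columns gives the other case.
-/

section Rank

variable {m n K : Type*} [Fintype n] [CommRing K] [IsDomain K]

theorem mul_eq_mul_of_rank_le_one {R : Matrix m n K} (hR : R.rank ≤ 1) (i j : m) (k l : n) :
    R i k * R j l = R i l * R j k := by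
  by_contra hne
  have hdet : (R.submatrix ![i, j] ![k, l]).det ≠ 0 := by
    rwa [det_fin_two, sub_ne_zero]
  have hrank : 2 ≤ R.rank := by
    simpa only [rank_of_det_ne_zero hdet, Fintype.card_fin] using
      R.rank_submatrix_le ![i, j] ![k, l]
  lia

end Rank

section Duality

variable {m n m' n' : Type*}

/-- The functional `R ↦ R i l / A i l + R j k / A j k - A j l * R i k / (A i l * A j k)`, the dual
optimum for a positive `2 × 2` matrix with rows `i, j` and columns `k, l` when
`A i k * A j l ≤ A i l * A j k`. -/
noncomputable def minorFunctional (A : Matrix m n ℝ) (i j : m) (k l : n) :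
    Matrix m n ℝ →ₗ[ℝ] ℝ :=
  (A i l)⁻¹ • entryLinearMap ℝ ℝ i l + (A j k)⁻¹ • entryLinearMap ℝ ℝ j k -
    (A j l / (A i l * A j k)) • entryLinearMap ℝ ℝ i k

theorem minorFunctional_apply (A R : Matrix m n ℝ) (i j : m) (k l : n) :
    minorFunctional A i j k l R =
      R i l / A i l + R j k / A j k - R i k * A j l / (A i l * A j k) := by
  simp only [minorFunctional, LinearMap.sub_apply, LinearMap.add_apply, LinearMap.smul_apply,
    entryLinearMap_apply, smul_eq_mul]
  ring

variable [Fintype m] [Fintype n] [Fintype m'] [Fintype n']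

/-- Feasibility of a functional in the linear program defining `τ₊(A)`: it is at most `1` on every
atom. -/
def IsDualFeasible (A : Matrix m n ℝ) (L : Matrix m n ℝ →ₗ[ℝ] ℝ) : Prop :=
  ∀ R ∈ Aplus A, L R ≤ 1

theorem IsDualFeasible.tauPlus_eq {A : Matrix m n ℝ} {L : Matrix m n ℝ →ₗ[ℝ] ℝ}
    (hL : IsDualFeasible A L) (hmax : ∀ M, IsDualFeasible A M → M A ≤ L A) :
    tauPlus A = L A := by
  refine IsGreatest.csSup_eq ⟨⟨L, hL, rfl⟩, ?_⟩
  rintro _ ⟨M, hM, rfl⟩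
  exact hmax M hM

theorem vecMulVec_mem_Aplus {A : Matrix m n ℝ} {u : m → ℝ} {v : n → ℝ}
    (h : ∀ i j, 0 ≤ u i * v j ∧ u i * v j ≤ A i j) : vecMulVec u v ∈ Aplus A :=
  ⟨rank_vecMulVec_le u v, h⟩

theorem submatrix_mem_Aplus {A R : Matrix m n ℝ} (hR : R ∈ Aplus A) (f : m' → m) (g : n' → n) :
    R.submatrix f g ∈ Aplus (A.submatrix f g) :=
  ⟨(R.rank_submatrix_le f g).trans hR.1, fun i j ↦ hR.2 (f i) (g j)⟩

theorem IsDualFeasible.comp_reindexLinearEquiv {A : Matrix m n ℝ} {L : Matrix m n ℝ →ₗ[ℝ] ℝ}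
    (hL : IsDualFeasible A L) (e : m' ≃ m) (f : n' ≃ n) :
    IsDualFeasible (A.submatrix e f) (L ∘ₗ (reindexLinearEquiv ℝ ℝ e f).toLinearMap) := by
  intro R hR
  apply hL
  simpa using submatrix_mem_Aplus hR e.symm f.symm

theorem tauPlus_submatrix (A : Matrix m n ℝ) (e : m' ≃ m) (f : n' ≃ n) :
    tauPlus (A.submatrix e f) = tauPlus A := by
  refine congrArg sSup (Set.Subset.antisymm ?_ ?_)
  · rintro _ ⟨L, hL, rfl⟩
    have hL' := IsDualFeasible.comp_reindexLinearEquiv hL e.symm f.symm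
    rw [submatrix_submatrix, e.self_comp_symm, f.self_comp_symm, submatrix_id_id] at hL'
    exact ⟨_, hL', by simp⟩
  · rintro _ ⟨L, hL, rfl⟩
    exact ⟨_, IsDualFeasible.comp_reindexLinearEquiv hL e f, by simp⟩

theorem isDualFeasible_minorFunctional (A : Matrix m n ℝ) (i j : m) (k l : n) :
    IsDualFeasible A (minorFunctional A i j k l) := by
  rintro R ⟨hrank, hbound⟩
  have hle_one (p : m) (q : n) : R p q / A p q ≤ 1 :=
    div_le_one_of_le₀ (hbound p q).2 ((hbound p q).1.trans (hbound p q).2)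
  have hden : 0 ≤ A i l * A j k :=
    mul_nonneg ((hbound i l).1.trans (hbound i l).2) ((hbound j k).1.trans (hbound j k).2)
  have hprod : R i l / A i l * (R j k / A j k) ≤ R i k * A j l / (A i l * A j k) := by
    rw [div_mul_div_comm, ← mul_eq_mul_of_rank_le_one hrank]
    gcongr
    exacts [(hbound i k).1, (hbound j l).2]
  rw [minorFunctional_apply]
  linarith [mul_nonneg (sub_nonneg.2 (hle_one i l)) (sub_nonneg.2 (hle_one j k))]

end Duality

section FinTwo

variable {x y z w : ℝ}

theorem IsDualFeasible.apply_le_of_diag_le_antidiag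
    {L : Matrix (Fin 2) (Fin 2) ℝ →ₗ[ℝ] ℝ} (hL : IsDualFeasible !![x, y; z, w] L)
    (hx : 0 ≤ x) (hy : 0 < y) (hz : 0 < z) (hw : 0 ≤ w) (h : x * w ≤ y * z) :
    L !![x, y; z, w] ≤ 2 - x * w / (y * z) := by
  have hs : 0 ≤ 1 - x * w / (y * z) := sub_nonneg.2 (div_le_one_of_le₀ h (by positivity))
  have hlowered : vecMulVec ![1, w / y] ![x, y] ∈ Aplus !![x, y; z, w] := by
    have hwx : 0 ≤ w / y * x := by positivity
    have hwxz : w / y * x ≤ z := by rwa [div_mul_eq_mul_div₀, div_le_iff₀' hy, mul_comm w]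
    apply vecMulVec_mem_Aplus
    simp [Fin.forall_fin_two, hx, hy.le, hy.ne', hw, hwx, hwxz]
  have hcorner : vecMulVec ![0, z] ![1, 0] ∈ Aplus !![x, y; z, w] := by
    apply vecMulVec_mem_Aplus
    simp [Fin.forall_fin_two, hx, hy.le, hz.le, hw]
  have hdecomp : !![x, y; z, w] =
      vecMulVec ![1, w / y] ![x, y] + (1 - x * w / (y * z)) • vecMulVec ![0, z] ![1, 0] := by
    have hentry : w / y * x + (1 - x * w / (y * z)) * z = z := by field_simp; ring
    ext i j
    fin_cases i <;> fin_cases j <;> simp [hentry, hy.ne']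
  calc L !![x, y; z, w]
      = L (vecMulVec ![1, w / y] ![x, y]) +
          (1 - x * w / (y * z)) * L (vecMulVec ![0, z] ![1, 0]) := by
        rw [hdecomp, map_add, map_smul, smul_eq_mul]
    _ ≤ 1 + (1 - x * w / (y * z)) * 1 := by
        gcongr
        exacts [hL _ hlowered, hL _ hcorner]
    _ = 2 - x * w / (y * z) := by ring

theorem tauPlus_fin_two_of_diag_le_antidiag (hx : 0 ≤ x) (hy : 0 < y) (hz : 0 < z) (hw : 0 ≤ w)
    (h : x * w ≤ y * z) : tauPlus !![x, y; z, w] = 2 - x * w / (y * z) := by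
  have hvalue : minorFunctional !![x, y; z, w] 0 1 0 1 !![x, y; z, w] = 2 - x * w / (y * z) := by
    simp [minorFunctional_apply, hy.ne', hz.ne', one_add_one_eq_two]
  rw [← hvalue]
  refine (isDualFeasible_minorFunctional _ 0 1 0 1).tauPlus_eq fun L hL ↦ ?_
  exact (hL.apply_le_of_diag_le_antidiag hx hy hz hw h).trans_eq hvalue.symm

theorem tauPlus_fin_two_swap_columns (x y z w : ℝ) :
    tauPlus !![y, x; w, z] = tauPlus !![x, y; z, w] := by
  rw [← tauPlus_submatrix !![x, y; z, w] (Equiv.refl _) (Equiv.swap 0 1)]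
  congr 1
  ext i j
  fin_cases i <;> fin_cases j <;> rfl

theorem tauPlus_fin_two_of_antidiag_le_diag (hx : 0 < x) (hy : 0 ≤ y) (hz : 0 ≤ z) (hw : 0 < w)
    (h : y * z ≤ x * w) : tauPlus !![x, y; z, w] = 2 - y * z / (x * w) := by
  rw [← tauPlus_fin_two_swap_columns, tauPlus_fin_two_of_diag_le_antidiag hy hx hw hz h]

end FinTwo

/-- closed-form formula for `τ₊` of a `2×2` matrix with strictly
positive entries: `τ₊([[x,y],[z,w]]) = 2 − min(xw/(yz), yz/(xw))`. -/
theorem stmt13 (x y z w : ℝ) (hx : 0 < x) (hy : 0 < y) (hz : 0 < z) (hw : 0 < w) :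
    (x * w ≤ y * z → tauPlus !![x, y; z, w] = 2 - x * w / (y * z)) ∧
    (y * z ≤ x * w → tauPlus !![x, y; z, w] = 2 - y * z / (x * w)) ∧
    tauPlus !![x, y; z, w] = 2 - min (x * w / (y * z)) (y * z / (x * w)) := by
  have hdiag := tauPlus_fin_two_of_diag_le_antidiag hx.le hy hz hw.le
  have hanti := tauPlus_fin_two_of_antidiag_le_diag hx hy.le hz.le hw
  refine ⟨hdiag, hanti, ?_⟩
  rcases le_total (x * w) (y * z) with h | h
  · rw [hdiag h, min_eq_left (by gcongr)]
  · rw [hanti h, min_eq_right (by gcongr)]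
end

section
/- Let 0 ≤ a ≤ 1 and 0 ≤ b ≤ 1, let P = [−1,1]² ⊆ ℝ² and S(a,b) = [−a,a]×[−b,b] ⊆ ℝ². Then there exist three points p₁, p₂, p₃ ∈ ℝ² such that S(a,b) ⊆ conv{p₁,p₂,p₃} ⊆ P if and only if (1+a)(1+b) ≤ 2. -/
/-!
Fix a triangle between the two rectangles. Four extremal roles (leftmost, rightmost, lowest,
highest) are shared by three vertices, so some vertex `p` is extremal in both coordinates; by
symmetry it is `p = (x, y)` with `a ≤ x ≤ 1` and `b ≤ y ≤ 1`. Let `l` be the barycentric coordinate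
of `p`. Every affine `f` that is nonnegative on the triangle satisfies `l v * f p ≤ f v` there.
Taking for `f` the distances to the bottom and left sides of the square gives
`l (a, -b) ≤ (1 - b) / (1 + y)` and `l (-a, b) ≤ (1 - a) / (1 + x)`, while `0 ≤ l (-a, -b)`. Writing
`p` as an affine combination of these three corners and using `l p = 1` leaves a single inequality
in `x, y, a, b`, which forces `(1 + a) * (1 + b) ≤ 2`.

Conversely, if `(1 + a) * (1 + c) = 2` then the triangle with vertices `(-1, -1)`, `(1, -c ^ 2)`,
`(-a ^ 2, 1)` has the corners `(a, -c)`, `(a, c)`, `(-a, c)` on its three sides.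
-/

open Set

section AffineBasis

variable {ι k E : Type*} [Field k] [AddCommGroup E] [Module k E]

lemma exists_affineBasis_coe_eq_of_affineSpan_eq_top [Fintype ι] (p : ι → E)
    (hcard : Fintype.card ι = Module.finrank k E + 1) (hp : affineSpan k (range p) = ⊤) :
    ∃ B : AffineBasis ι k E, ⇑B = p := by
  refine ⟨⟨p, ?_, hp⟩, rfl⟩
  rw [affineIndependent_iff_finrank_vectorSpan_eq k p hcard, ← direction_affineSpan, hp,
    AffineSubspace.direction_top, finrank_top]

variable [Finite ι] [LinearOrder k] [IsStrictOrderedRing k] (B : AffineBasis ι k E) {v : E}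

lemma coord_mul_le_of_mem_convexHull (f : E →ᵃ[k] k) (hf : ∀ j, 0 ≤ f (B j))
    (hv : v ∈ convexHull k (range B)) (i : ι) : B.coord i v * f (B i) ≤ f v := by
  cases nonempty_fintype ι
  rw [B.convexHull_eq_nonneg_coord] at hv
  have hfv : f v = ∑ j, B.coord j v * f (B j) := by
    conv_lhs => rw [← B.affineCombination_coord_eq_self v]
    rw [Finset.map_affineCombination _ _ _ (B.sum_coord_apply_eq_one v),
      Finset.affineCombination_eq_linear_combination _ _ _ (B.sum_coord_apply_eq_one v)]
    rfl
  rw [hfv]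
  exact Finset.single_le_sum (f := fun j => B.coord j v * f (B j))
    (fun j _ => mul_nonneg (hv j) (hf j)) (Finset.mem_univ i)

lemma coord_mul_one_add_le_of_mem_convexHull (g : E →ₗ[k] k) (hg : ∀ j, -1 ≤ g (B j))
    (hv : v ∈ convexHull k (range B)) (i : ι) : B.coord i v * (1 + g (B i)) ≤ 1 + g v :=
  coord_mul_le_of_mem_convexHull B (AffineMap.const k E 1 + g.toAffineMap)
    (fun j => neg_le_iff_add_nonneg'.1 (hg j)) hv i

end AffineBasis

lemma mem_Icc_neg_iff_abs_le {α β : Type*} [AddCommGroup α] [LinearOrder α] [IsOrderedAddMonoid α]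
    [AddCommGroup β] [LinearOrder β] [IsOrderedAddMonoid β] {a : α} {b : β} {p : α × β} :
    p ∈ Icc (-a, -b) (a, b) ↔ |p.1| ≤ a ∧ |p.2| ≤ b := by
  rw [Icc_prod_eq, mem_prod, mem_Icc, mem_Icc, abs_le, abs_le]

section Extremal

lemma isExtrOn_univ_of_forall_le {ι α : Type*} [PartialOrder α] {f : ι → α} {m : ι}
    (hmin : ∀ j, f m ≤ f j) (hmax : ∀ j, f j ≤ f m) (i : ι) : IsExtrOn f univ i :=
  .inl <| isMinOn_univ_iff.2 fun j => (hmax i).trans (hmin j)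

lemma exists_isExtrOn_univ_and_isExtrOn_univ {ι α β : Type*} [Fintype ι] [Nonempty ι]
    [LinearOrder α] [LinearOrder β] (hcard : Fintype.card ι ≤ 3) (f : ι → α) (g : ι → β) :
    ∃ i, IsExtrOn f univ i ∧ IsExtrOn g univ i := by
  classical
  obtain ⟨m, hm⟩ := Finite.exists_min f
  obtain ⟨M, hM⟩ := Finite.exists_max f
  obtain ⟨n, hn⟩ := Finite.exists_min g
  obtain ⟨N, hN⟩ := Finite.exists_max g
  have hfm : IsExtrOn f univ m := .inl (isMinOn_univ_iff.2 hm)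
  have hfM : IsExtrOn f univ M := .inr (isMaxOn_univ_iff.2 hM)
  have hgn : IsExtrOn g univ n := .inl (isMinOn_univ_iff.2 hn)
  have hgN : IsExtrOn g univ N := .inr (isMaxOn_univ_iff.2 hN)
  by_contra! hne
  have hmM : m ≠ M := by
    rintro rfl
    exact hne n (isExtrOn_univ_of_forall_le hm hM n) hgn
  have hnN : n ≠ N := by
    rintro rfl
    exact hne m hfm (isExtrOn_univ_of_forall_le hn hN m)
  have hdisj {i j : ι} (hi : IsExtrOn f univ i) (hj : IsExtrOn g univ j) : i ≠ j := by
    rintro rfl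
    exact hne i hi hj
  have hfour : ({m, M, n, N} : Finset ι).card = 4 := by
    simp [hmM, hnN, hdisj hfm hgn, hdisj hfm hgN, hdisj hfM hgn, hdisj hfM hgN]
  have := Finset.card_le_univ {m, M, n, N}
  lia

lemma exists_abs_eq_one_forall_mul_le {ι : Type*} {f : ι → ℝ} {i : ι} (h : IsExtrOn f univ i) :
    ∃ s : ℝ, |s| = 1 ∧ ∀ j, s * f j ≤ s * f i := by
  rcases h with h | h
  · exact ⟨-1, by simp, fun j => by simpa using isMinOn_univ_iff.1 h j⟩
  · exact ⟨1, by simp, fun j => by simpa using isMaxOn_univ_iff.1 h j⟩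

end Extremal

section Necessity

lemma two_mul_affineMap_eq_corners {k : Type*} [CommRing k] (f : k × k →ᵃ[k] k)
    (s t a b x y : k) :
    2 * a * b * f (s * x, t * y) = b * (x + a) * f (s * a, t * -b) +
      a * (y + b) * f (s * -a, t * b) - (b * x + a * y) * f (s * -a, t * -b) := by
  have hf (u v : k) : f (u, v) = u * f.linear (1, 0) + v * f.linear (0, 1) + f 0 := by
    have huv : ((u, v) : k × k) = u • (1, 0) + v • (0, 1) := by simp
    rw [congrFun f.decomp (u, v), Pi.add_apply, huv, map_add, map_smul, map_smul, smul_eq_mul,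
      smul_eq_mul]
  rw [hf (s * x), hf (s * a), hf (s * -a), hf (s * -a)]
  ring

lemma one_add_mul_one_add_le_two_of_le {a b x y : ℝ} (ha : 0 < a) (hb : 0 < b) (hax : a ≤ x)
    (hx : x ≤ 1) (hby : b ≤ y) (hy : y ≤ 1)
    (h : 2 * a * b * ((1 + x) * (1 + y)) ≤
      b * (1 - b) * ((x + a) * (1 + x)) + a * (1 - a) * ((y + b) * (1 + y))) :
    (1 + a) * (1 + b) ≤ 2 := by
  -- A convex quadratic lies below its chord over `[c, 1]`; here the chord passes through `0`.
  have chord {c z : ℝ} (hcz : c ≤ z) (hz : z ≤ 1) : (z + c) * (1 + z) ≤ 2 * (1 + c) * z := by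
    nlinarith
  have hX : b * (1 - b) * ((x + a) * (1 + x)) ≤ b * (1 - b) * (2 * (1 + a) * x) :=
    mul_le_mul_of_nonneg_left (chord hax hx) (mul_nonneg hb.le (by linarith))
  have hY : a * (1 - a) * ((y + b) * (1 + y)) ≤ a * (1 - a) * (2 * (1 + b) * y) :=
    mul_le_mul_of_nonneg_left (chord hby hy) (mul_nonneg ha.le (by linarith))
  have hfactor : b * (1 - b) * ((1 + a) * x) + a * (1 - a) * ((1 + b) * y) -
      a * b * ((1 + x) * (1 + y)) =
        -(((1 + a) * (1 + b) - 2) * (b * x + a * y)) - a * b * ((1 - x) * (1 - y)) := by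
    ring
  have hxy : 0 ≤ a * b * ((1 - x) * (1 - y)) :=
    mul_nonneg (by positivity) (mul_nonneg (by linarith) (by linarith))
  have hneg : ((1 + a) * (1 + b) - 2) * (b * x + a * y) ≤ 0 := by linarith [hfactor]
  have hpos : 0 < b * x + a * y :=
    add_pos (mul_pos hb (ha.trans_le hax)) (mul_pos ha (hb.trans_le hby))
  linarith [nonpos_of_mul_nonpos_left hneg hpos]

lemma one_add_mul_one_add_le_two_of_affineMap {a b x y s t : ℝ} (ha : 0 < a) (hb : 0 < b)
    (hax : a ≤ x) (hx : x ≤ 1) (hby : b ≤ y) (hy : y ≤ 1) (l : ℝ × ℝ →ᵃ[ℝ] ℝ)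
    (hl : l (s * x, t * y) = 1) (hopp : 0 ≤ l (s * -a, t * -b))
    (hbot : l (s * a, t * -b) * (1 + y) ≤ 1 - b) (hleft : l (s * -a, t * b) * (1 + x) ≤ 1 - a) :
    (1 + a) * (1 + b) ≤ 2 := by
  have hx0 : 0 < x := ha.trans_le hax
  have hy0 : 0 < y := hb.trans_le hby
  refine one_add_mul_one_add_le_two_of_le ha hb hax hx hby hy ?_
  have hcomb : 2 * a * b ≤
      b * (x + a) * l (s * a, t * -b) + a * (y + b) * l (s * -a, t * b) := by
    have := two_mul_affineMap_eq_corners l s t a b x y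
    rw [hl, mul_one] at this
    linarith [mul_nonneg (by positivity : 0 ≤ b * x + a * y) hopp]
  calc 2 * a * b * ((1 + x) * (1 + y))
      ≤ (b * (x + a) * l (s * a, t * -b) + a * (y + b) * l (s * -a, t * b)) *
          ((1 + x) * (1 + y)) := mul_le_mul_of_nonneg_right hcomb (by positivity)
    _ = b * ((x + a) * (1 + x)) * (l (s * a, t * -b) * (1 + y)) +
          a * ((y + b) * (1 + y)) * (l (s * -a, t * b) * (1 + x)) := by ring
    _ ≤ b * ((x + a) * (1 + x)) * (1 - b) + a * ((y + b) * (1 + y)) * (1 - a) := by gcongr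
    _ = _ := by ring

variable {ι : Type*} {a b : ℝ}

-- The signs `s` and `t` reflect `B i` into the upper right quadrant.
lemma one_add_mul_one_add_le_two_of_extremal_vertex [Finite ι] (B : AffineBasis ι ℝ (ℝ × ℝ))
    (ha : 0 < a) (hb : 0 < b) (hS : Icc (-a, -b) (a, b) ⊆ convexHull ℝ (range B))
    (hP : range B ⊆ Icc (-1, -1) (1, 1))
    {i : ι} {s t : ℝ} (hs : |s| = 1) (ht : |t| = 1) (hsi : ∀ j, s * (B j).1 ≤ s * (B i).1)
    (hti : ∀ j, t * (B j).2 ≤ t * (B i).2) : (1 + a) * (1 + b) ≤ 2 := by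
  have hss (c : ℝ) : s * (s * c) = c := by
    rw [← mul_assoc, ← abs_mul_abs_self, hs, one_mul, one_mul]
  have htt (c : ℝ) : t * (t * c) = c := by
    rw [← mul_assoc, ← abs_mul_abs_self, ht, one_mul, one_mul]
  let g₁ : ℝ × ℝ →ₗ[ℝ] ℝ := s • LinearMap.fst ℝ ℝ ℝ
  let g₂ : ℝ × ℝ →ₗ[ℝ] ℝ := t • LinearMap.snd ℝ ℝ ℝ
  have hg₁ (j : ι) : |g₁ (B j)| ≤ 1 := by
    simpa [g₁, abs_mul, hs] using (mem_Icc_neg_iff_abs_le.1 (hP (mem_range_self j))).1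
  have hg₂ (j : ι) : |g₂ (B j)| ≤ 1 := by
    simpa [g₂, abs_mul, ht] using (mem_Icc_neg_iff_abs_le.1 (hP (mem_range_self j))).2
  have hcorner {u v : ℝ} (hu : |u| = a) (hv : |v| = b) :
      (s * u, t * v) ∈ convexHull ℝ (range B) :=
    hS <| mem_Icc_neg_iff_abs_le.2 <| by simp [abs_mul, hs, ht, hu, hv]
  have ha' : |-a| = a := by rw [abs_neg, abs_of_pos ha]
  have hb' : |-b| = b := by rw [abs_neg, abs_of_pos hb]
  have hmem := hcorner (abs_of_pos ha) (abs_of_pos hb)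
  have hax : g₁ (s * a, t * b) ≤ g₁ (B i) :=
    convexHull_min (forall_mem_range.2 hsi) (convex_halfSpace_le g₁.isLinear _) hmem
  have hby : g₂ (s * a, t * b) ≤ g₂ (B i) :=
    convexHull_min (forall_mem_range.2 hti) (convex_halfSpace_le g₂.isLinear _) hmem
  have hopp : 0 ≤ B.coord i (s * -a, t * -b) :=
    (B.convexHull_eq_nonneg_coord ▸ hcorner ha' hb' :) i
  have hbot : B.coord i (s * a, t * -b) * (1 + g₂ (B i)) ≤ 1 + g₂ (s * a, t * -b) :=
    coord_mul_one_add_le_of_mem_convexHull B g₂ (fun j => (abs_le.1 (hg₂ j)).1)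
      (hcorner (abs_of_pos ha) hb') i
  have hleft : B.coord i (s * -a, t * b) * (1 + g₁ (B i)) ≤ 1 + g₁ (s * -a, t * b) :=
    coord_mul_one_add_le_of_mem_convexHull B g₁ (fun j => (abs_le.1 (hg₁ j)).1)
      (hcorner ha' (abs_of_pos hb)) i
  refine one_add_mul_one_add_le_two_of_affineMap ha hb (x := g₁ (B i)) (y := g₂ (B i)) ?_
    (abs_le.1 (hg₁ i)).2 ?_ (abs_le.1 (hg₂ i)).2 (B.coord i) ?_ hopp ?_ ?_
  · simpa [g₁, hss] using hax
  · simpa [g₂, htt] using hby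
  · simp [g₁, g₂, hss, htt]
  · simpa [g₂, htt, ← sub_eq_add_neg] using hbot
  · simpa [g₁, hss, ← sub_eq_add_neg] using hleft

lemma zero_mem_interior_Icc_neg (ha : 0 < a) (hb : 0 < b) :
    (0 : ℝ × ℝ) ∈ interior (Icc (-a, -b) (a, b)) := by
  rw [mem_interior_iff_mem_nhds, Icc_prod_eq]
  exact prod_mem_nhds (Icc_mem_nhds (neg_lt_zero.2 ha) ha) (Icc_mem_nhds (neg_lt_zero.2 hb) hb)

lemma one_add_mul_one_add_le_two_of_subset_convexHull [Fintype ι] (p : ι → ℝ × ℝ)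
    (hcard : Fintype.card ι = 3) (ha : 0 < a) (hb : 0 < b)
    (hS : Icc (-a, -b) (a, b) ⊆ convexHull ℝ (range p))
    (hP : range p ⊆ Icc (-1, -1) (1, 1)) : (1 + a) * (1 + b) ≤ 2 := by
  have hspan : affineSpan ℝ (range p) = ⊤ :=
    affineSpan_eq_top_of_nonempty_interior ⟨0, interior_mono hS (zero_mem_interior_Icc_neg ha hb)⟩
  obtain ⟨B, rfl⟩ := exists_affineBasis_coe_eq_of_affineSpan_eq_top p (by simp [hcard]) hspan
  have := B.nonempty
  obtain ⟨i, hi₁, hi₂⟩ :=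
    exists_isExtrOn_univ_and_isExtrOn_univ hcard.le (fun j => (B j).1) (fun j => (B j).2)
  obtain ⟨s, hs, hsi⟩ := exists_abs_eq_one_forall_mul_le hi₁
  obtain ⟨t, ht, hti⟩ := exists_abs_eq_one_forall_mul_le hi₂
  exact one_add_mul_one_add_le_two_of_extremal_vertex B ha hb hS hP hs ht hsi hti

end Necessity

section Sufficiency

/-- Twice the signed area of the triangle `p q r`, positive when it is traversed counterclockwise.
Divided by `cross p q r`, its values with one vertex replaced by `z` are the barycentric
coordinates of `z`. -/
def cross {k : Type*} [Ring k] (p q r : k × k) : k :=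
  (q.1 - p.1) * (r.2 - p.2) - (q.2 - p.2) * (r.1 - p.1)

lemma mem_convexHull_triple_of_cross_nonneg {k : Type*} [Field k] [LinearOrder k]
    [IsStrictOrderedRing k] {p q r z : k × k} (hpqr : 0 < cross p q r)
    (hp : 0 ≤ cross z q r) (hq : 0 ≤ cross p z r) (hr : 0 ≤ cross p q z) :
    z ∈ convexHull k {p, q, r} := by
  refine mem_convexHull_of_exists_fintype
    ![cross z q r / cross p q r, cross p z r / cross p q r, cross p q z / cross p q r] ![p, q, r]
    ?_ ?_ ?_ ?_
  · simp [Fin.forall_fin_succ, div_nonneg, hpqr.le, hp, hq, hr]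
  · simp only [Fin.sum_univ_three, Matrix.cons_val]
    field_simp
    simp only [cross]
    ring
  · simp [Fin.forall_fin_succ]
  · simp only [Fin.sum_univ_three, Matrix.cons_val]
    ext <;> simp only [Prod.fst_add, Prod.snd_add, Prod.smul_fst, Prod.smul_snd, smul_eq_mul] <;>
      field_simp <;> simp only [cross] <;> ring

lemma sq_le_one_of_one_add_mul_one_add_eq_two {a c : ℝ} (ha : 0 ≤ a) (hc : 0 ≤ c)
    (h : (1 + a) * (1 + c) = 2) : a ^ 2 ≤ 1 :=
  pow_le_one₀ ha (by linarith [mul_nonneg ha hc])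

lemma Icc_subset_convexHull_of_one_add_mul_one_add_eq_two {a c : ℝ} (ha : 0 ≤ a) (hc : 0 ≤ c)
    (h : (1 + a) * (1 + c) = 2) :
    Icc (-a, -c) (a, c) ⊆ convexHull ℝ {(-1, -1), (1, -c ^ 2), (-a ^ 2, 1)} := by
  have hc2 : c ^ 2 ≤ 1 :=
    sq_le_one_of_one_add_mul_one_add_eq_two hc ha (mul_comm (1 + a) _ ▸ h)
  have ha2 : a ^ 2 ≤ 1 := sq_le_one_of_one_add_mul_one_add_eq_two ha hc h
  rintro ⟨x, y⟩ ⟨⟨hax, hcy⟩, hxa, hyc⟩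
  simp only at hax hcy hxa hyc
  have hp : cross (x, y) (1, -c ^ 2) (-a ^ 2, 1) =
      (1 + c ^ 2) * (a - x) + (1 + a ^ 2) * (c - y) := by
    simp only [cross]
    linear_combination (-(1 + a * c)) * h
  have hq : cross (-1, -1) (x, y) (-a ^ 2, 1) = 2 * (x + a) + (1 - a ^ 2) * (c - y) := by
    simp only [cross]
    linear_combination (-(1 - a)) * h
  have hr : cross (-1, -1) (1, -c ^ 2) (x, y) = 2 * (y + c) + (1 - c ^ 2) * (a - x) := by
    simp only [cross]
    linear_combination (-(1 - c)) * h
  refine mem_convexHull_triple_of_cross_nonneg ?_ ?_ ?_ ?_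
  · have : cross (-1, -1) (1, -c ^ 2) (-a ^ 2, 1) = 4 - (1 - a ^ 2) * (1 - c ^ 2) := by
      simp only [cross]
      ring
    rw [this]
    nlinarith
  · rw [hp]
    exact add_nonneg (mul_nonneg (by positivity) (by linarith))
      (mul_nonneg (by positivity) (by linarith))
  · rw [hq]
    exact add_nonneg (by linarith) (mul_nonneg (by linarith) (by linarith))
  · rw [hr]
    exact add_nonneg (by linarith) (mul_nonneg (by linarith) (by linarith))

lemma exists_triangle_of_one_add_mul_one_add_le_two {a b : ℝ} (ha : 0 ≤ a) (hb : 0 ≤ b)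
    (h : (1 + a) * (1 + b) ≤ 2) :
    ∃ p q r : ℝ × ℝ, Icc (-a, -b) (a, b) ⊆ convexHull ℝ {p, q, r} ∧
      convexHull ℝ {p, q, r} ⊆ Icc (-1, -1) (1, 1) := by
  have ha' : 0 < 1 + a := by linarith
  obtain ⟨c, hc⟩ : ∃ c, (1 + a) * (1 + c) = 2 :=
    ⟨2 / (1 + a) - 1, by rw [add_sub_cancel, mul_div_cancel₀ _ ha'.ne']⟩
  have hbc : b ≤ c := by
    have := le_of_mul_le_mul_left (h.trans_eq hc.symm) ha'
    linarith
  refine ⟨(-1, -1), (1, -c ^ 2), (-a ^ 2, 1), ?_, convexHull_min ?_ (convex_Icc _ _)⟩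
  · refine Subset.trans ?_
      (Icc_subset_convexHull_of_one_add_mul_one_add_eq_two ha (hb.trans hbc) hc)
    exact Icc_subset_Icc ⟨le_rfl, neg_le_neg hbc⟩ ⟨le_rfl, hbc⟩
  · have ha2 : a ^ 2 ≤ 1 := sq_le_one_of_one_add_mul_one_add_eq_two ha (hb.trans hbc) hc
    have hc2 : c ^ 2 ≤ 1 :=
      sq_le_one_of_one_add_mul_one_add_eq_two (hb.trans hbc) ha (mul_comm (1 + a) _ ▸ hc)
    have hneg (z : ℝ) : -z ^ 2 ≤ 1 := by linarith [sq_nonneg z]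
    simp [insert_subset_iff, ha2, hc2, hneg]

end Sufficiency

/-- for `0 ≤ a, b ≤ 1`, there exists a triangle `T` with
`[−a,a]×[−b,b] ⊆ T ⊆ [−1,1]²` if and only if `(1+a)(1+b) ≤ 2`. -/
theorem stmt15 (a b : ℝ) (ha0 : 0 ≤ a) (ha1 : a ≤ 1) (hb0 : 0 ≤ b) (hb1 : b ≤ 1) :
    (∃ p₁ p₂ p₃ : ℝ × ℝ,
      Set.Icc (-a, -b) (a, b) ⊆ convexHull ℝ {p₁, p₂, p₃} ∧
      convexHull ℝ {p₁, p₂, p₃} ⊆ Set.Icc ((-1 : ℝ), (-1 : ℝ)) (1, 1)) ↔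
    (1 + a) * (1 + b) ≤ 2 := by
  refine ⟨?_, exists_triangle_of_one_add_mul_one_add_le_two ha0 hb0⟩
  rintro ⟨p₁, p₂, p₃, hS, hP⟩
  rcases ha0.eq_or_lt with rfl | ha
  · linarith
  rcases hb0.eq_or_lt with rfl | hb
  · linarith
  have hrange : range ![p₁, p₂, p₃] = {p₁, p₂, p₃} := by
    rw [Matrix.range_cons, Matrix.range_cons_cons_empty, singleton_union]
  rw [← hrange] at hS hP
  exact one_add_mul_one_add_le_two_of_subset_convexHull _ (Fintype.card_fin 3) ha hb hS
    ((subset_convexHull ℝ _).trans hP)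
end
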